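/- arXiv:1001.0960 — 2 statements merged into one kernel-verified Lean document; each statement's English description precedes it below -/
import Mathlib

section
/- Suppose Assumptions A1 and A2 hold, V > 0, a C-approximate policy is run against an arbitrary event sequence, and all queues are initially empty. Then for any designated time t_end > 0 the time averages over the first t_end slots satisfy: ȳ_l + g_l(x̄) ≤ C₀√(V/t_end)[1 + Σ_{m=1}^M β_{l,m}] for all l ∈ {1,…,L}; ā_k ≤ b̄_k + C₀√(V/t_end) for all k ∈ {1,…,K}; and there exists ε ∈ ℝ^M with |ε_m| ≤ C₀√(V/t_end) for all m such that x̄ + ε ∈ X; where C₀ = √(2[(B + C)/V + (y₀^max − y₀^min) + (f^max − f^min)]). -/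
/-- The "drift-plus-penalty" expression `E_t(α,γ)` whose (approximate) per-slot
minimization defines the universal scheduling algorithm. -/
noncomputable def driftExpr {Act Ω : Type*} {K M L : ℕ}
    (ahat bhat : Fin K → Act → Ω → ℝ) (xhat : Fin M → Act → Ω → ℝ)
    (y0hat : Act → Ω → ℝ) (yhat : Fin L → Act → Ω → ℝ)
    (g : Fin L → (Fin M → ℝ) → ℝ) (f : (Fin M → ℝ) → ℝ) (V : ℝ)
    (w : Ω) (Zv : Fin L → ℝ) (Qv : Fin K → ℝ) (Hv : Fin M → ℝ)
    (a : Act) (γ : Fin M → ℝ) : ℝ :=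
  V * y0hat a w + V * f γ
    + ∑ l, Zv l * (yhat l a w + g l γ)
    + ∑ k, Qv k * (ahat k a w - bhat k a w)
    + ∑ m, Hv m * (γ m - xhat m a w)

/-!
Take the quadratic Lyapunov function of all queues. In each slot the `C`-approximate choice competes
with the action supplied by Assumption A2, paired with `γ = x̂` so that the `H`-terms cancel; hence
the Lyapunov function grows by at most a constant per slot and every queue is `O(√t)`. A queue
dominates the accumulated violation of its constraint, so the time-averaged violation is at most the
backlog divided by the time, which is `O(1/√t)`. Jensen's inequality passes from the average of
`g(γ(t))` to `g(γ̄)`, and the queues `H` measure exactly how far `x̄` is from `γ̄ ∈ X`.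
-/

open Finset
open scoped BigOperators

section Queues

/-- `q` is the backlog of an initially empty queue with arrivals `a` and offered service `b`. -/
structure IsQueue (a b q : ℕ → ℝ) : Prop where
  zero : q 0 = 0
  succ (t : ℕ) : q (t + 1) = max (q t - b t) 0 + a t

/-- `z` is the initially empty virtual queue for the time-average constraint `d̄ ≤ 0`: it
accumulates `d` and is truncated below at zero. -/
structure IsInequalityQueue (d z : ℕ → ℝ) : Prop where
  zero : z 0 = 0
  succ (t : ℕ) : z (t + 1) = max (z t + d t) 0

/-- `h` is the initially empty virtual queue for the time-average constraint `ē = 0`: it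
accumulates `e` and may become negative. -/
structure IsEqualityQueue (e h : ℕ → ℝ) : Prop where
  zero : h 0 = 0
  succ (t : ℕ) : h (t + 1) = h t + e t

variable {a b d e q z h : ℕ → ℝ}

lemma sum_range_le_of_add_le_succ {u : ℕ → ℝ} (hu : u 0 = 0) (hstep : ∀ t, u t + d t ≤ u (t + 1))
    (n : ℕ) : ∑ t ∈ range n, d t ≤ u n :=
  calc ∑ t ∈ range n, d t ≤ ∑ t ∈ range n, (u (t + 1) - u t) :=
        sum_le_sum fun t _ => le_sub_iff_add_le'.2 (hstep t)
    _ = u n := by rw [sum_range_sub, hu, sub_zero]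

lemma max_zero_sq_le_sq (u : ℝ) : max u 0 ^ 2 ≤ u ^ 2 :=
  calc max u 0 ^ 2 ≤ |u| ^ 2 :=
        pow_le_pow_left₀ (le_max_right _ _) (max_le (le_abs_self u) (abs_nonneg u)) 2
    _ = u ^ 2 := sq_abs u

lemma IsQueue.nonneg (hq : IsQueue a b q) (ha : ∀ t, 0 ≤ a t) : ∀ t, 0 ≤ q t
  | 0 => hq.zero.ge
  | t + 1 => hq.succ t ▸ add_nonneg (le_max_right _ _) (ha t)

lemma IsQueue.sq_succ_le (hq : IsQueue a b q) (ha : ∀ t, 0 ≤ a t) (hb : ∀ t, 0 ≤ b t) (t : ℕ) :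
    q (t + 1) ^ 2 ≤ q t ^ 2 + 2 * (q t * (a t - b t)) + (b t ^ 2 + a t ^ 2) := by
  have hserved : max (q t - b t) 0 ≤ q t := max_le (sub_le_self _ (hb t)) (hq.nonneg ha t)
  calc q (t + 1) ^ 2
      = max (q t - b t) 0 ^ 2 + 2 * (max (q t - b t) 0 * a t) + a t ^ 2 := by rw [hq.succ]; ring
    _ ≤ (q t - b t) ^ 2 + 2 * (q t * a t) + a t ^ 2 := by
        gcongr ?_ + 2 * (?_ * _) + _
        exacts [max_zero_sq_le_sq _, ha t]
    _ = q t ^ 2 + 2 * (q t * (a t - b t)) + (b t ^ 2 + a t ^ 2) := by ring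

lemma IsQueue.expect_le (hq : IsQueue a b q) (n : ℕ) :
    𝔼 t ∈ range n, a t ≤ 𝔼 t ∈ range n, b t + q n / n := by
  have hsum : ∑ t ∈ range n, (a t - b t) ≤ q n :=
    sum_range_le_of_add_le_succ hq.zero
      (fun t => by linarith [hq.succ t, le_max_left (q t - b t) 0]) n
  rw [← sub_le_iff_le_add', ← expect_sub_distrib, expect_eq_sum_div_card, card_range]
  gcongr

lemma IsInequalityQueue.nonneg (hz : IsInequalityQueue d z) : ∀ t, 0 ≤ z t
  | 0 => hz.zero.ge
  | t + 1 => hz.succ t ▸ le_max_right _ _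

lemma IsInequalityQueue.sq_succ_le (hz : IsInequalityQueue d z) (t : ℕ) :
    z (t + 1) ^ 2 ≤ z t ^ 2 + 2 * (z t * d t) + d t ^ 2 := by
  rw [hz.succ]
  exact (max_zero_sq_le_sq _).trans_eq (by ring)

lemma IsInequalityQueue.expect_le (hz : IsInequalityQueue d z) (n : ℕ) :
    𝔼 t ∈ range n, d t ≤ z n / n := by
  rw [expect_eq_sum_div_card, card_range]
  gcongr
  exact sum_range_le_of_add_le_succ hz.zero (fun t => hz.succ t ▸ le_max_left _ _) n

lemma IsEqualityQueue.sq_succ (hh : IsEqualityQueue e h) (t : ℕ) :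
    h (t + 1) ^ 2 = h t ^ 2 + 2 * (h t * e t) + e t ^ 2 := by
  rw [hh.succ]
  ring

lemma IsEqualityQueue.expect_eq (hh : IsEqualityQueue e h) (n : ℕ) :
    𝔼 t ∈ range n, e t = h n / n := by
  have hstep (t : ℕ) : e t = h (t + 1) - h t := by rw [hh.succ, add_sub_cancel_left]
  simp only [expect_eq_sum_div_card, card_range, hstep, sum_range_sub, hh.zero, sub_zero]

end Queues

section Lyapunov

variable {ι κ μ : Type*} [Fintype ι] [Fintype κ] [Fintype μ]
  {a b Q : κ → ℕ → ℝ} {d Z : ι → ℕ → ℝ} {e H : μ → ℕ → ℝ} {D : ℝ} {n : ℕ}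

/-- The quadratic Lyapunov function of a network of queues, measuring its total backlog. -/
noncomputable def lyapunov (Z : ι → ℕ → ℝ) (Q : κ → ℕ → ℝ) (H : μ → ℕ → ℝ) (t : ℕ) : ℝ :=
  (∑ l, Z l t ^ 2 + ∑ k, Q k t ^ 2 + ∑ m, H m t ^ 2) / 2

lemma lyapunov_succ_le (hZ : ∀ l, IsInequalityQueue (d l) (Z l))
    (hQ : ∀ k, IsQueue (a k) (b k) (Q k)) (hH : ∀ m, IsEqualityQueue (e m) (H m))
    (ha : ∀ k t, 0 ≤ a k t) (hb : ∀ k t, 0 ≤ b k t) (t : ℕ) :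
    lyapunov Z Q H (t + 1) ≤ lyapunov Z Q H t
      + (1 / 2 * ∑ l, d l t ^ 2 + 1 / 2 * ∑ k, (b k t ^ 2 + a k t ^ 2) + 1 / 2 * ∑ m, e m t ^ 2)
      + (∑ l, Z l t * d l t + ∑ k, Q k t * (a k t - b k t) + ∑ m, H m t * e m t) := by
  have hZsq := sum_le_sum fun l (_ : l ∈ univ) => (hZ l).sq_succ_le t
  have hQsq := sum_le_sum fun k (_ : k ∈ univ) => (hQ k).sq_succ_le (ha k) (hb k) t
  have hHsq := sum_congr rfl fun m (_ : m ∈ univ) => (hH m).sq_succ t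
  rw [sum_add_distrib, sum_add_distrib, ← mul_sum] at hZsq hQsq hHsq
  unfold lyapunov
  linarith

lemma lyapunov_le_nat_mul (hZ : ∀ l, Z l 0 = 0) (hQ : ∀ k, Q k 0 = 0) (hH : ∀ m, H m 0 = 0)
    (hstep : ∀ t, lyapunov Z Q H (t + 1) ≤ lyapunov Z Q H t + D) (n : ℕ) :
    lyapunov Z Q H n ≤ n * D := by
  induction n with
  | zero => simp [lyapunov, hZ, hQ, hH]
  | succ n ih =>
    push_cast
    linarith [hstep n]

lemma abs_div_le_sqrt_div {r c s : ℝ} (hs : 0 < s) (h : r ^ 2 ≤ s * c) : |r / s| ≤ √(c / s) := by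
  refine Real.abs_le_sqrt ?_
  rw [div_pow, sq s, ← div_div]
  gcongr
  rwa [div_le_iff₀' hs]

lemma sq_le_sum_sq (v : ι → ℝ) (i : ι) : v i ^ 2 ≤ ∑ j, v j ^ 2 :=
  single_le_sum (f := fun j => v j ^ 2) (fun _ _ => sq_nonneg _) (mem_univ i)

lemma sq_le_two_mul_lyapunov (Z : ι → ℕ → ℝ) (Q : κ → ℕ → ℝ) (H : μ → ℕ → ℝ) (t : ℕ) :
    (∀ l, Z l t ^ 2 ≤ 2 * lyapunov Z Q H t) ∧ (∀ k, Q k t ^ 2 ≤ 2 * lyapunov Z Q H t) ∧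
      ∀ m, H m t ^ 2 ≤ 2 * lyapunov Z Q H t := by
  have hZ : 0 ≤ ∑ l, Z l t ^ 2 := by positivity
  have hQ : 0 ≤ ∑ k, Q k t ^ 2 := by positivity
  have hH : 0 ≤ ∑ m, H m t ^ 2 := by positivity
  unfold lyapunov
  exact ⟨fun l => by linarith [sq_le_sum_sq (Z · t) l],
    fun k => by linarith [sq_le_sum_sq (Q · t) k], fun m => by linarith [sq_le_sum_sq (H · t) m]⟩

lemma abs_queue_div_le_of_lyapunov_le (hn : 0 < n) (h : lyapunov Z Q H n ≤ n * D) :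
    (∀ l, |Z l n / n| ≤ √(2 * D / n)) ∧ (∀ k, |Q k n / n| ≤ √(2 * D / n)) ∧
      ∀ m, |H m n / n| ≤ √(2 * D / n) := by
  obtain ⟨hZ, hQ, hH⟩ := sq_le_two_mul_lyapunov Z Q H n
  have hbound {r : ℝ} (hr : r ^ 2 ≤ 2 * lyapunov Z Q H n) : |r / n| ≤ √(2 * D / n) :=
    abs_div_le_sqrt_div (Nat.cast_pos.2 hn) (by linarith)
  exact ⟨fun l => hbound (hZ l), fun k => hbound (hQ k), fun m => hbound (hH m)⟩

end Lyapunov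

section TimeAverages

variable {ι E : Type*} [AddCommGroup E] [Module ℝ E] [Module ℚ≥0 E] {s : Finset ι} {u : ι → E}
  {S : Set E}

lemma expect_eq_centerMass (s : Finset ι) (u : ι → E) :
    𝔼 i ∈ s, u i = s.centerMass (fun _ => (1 : ℝ)) u := by
  simp [expect, centerMass, ← NNRat.cast_smul_eq_nnqsmul ℝ]

lemma expect_mem_of_convex (hS : Convex ℝ S) (hs : s.Nonempty)
    (hu : ∀ i ∈ s, u i ∈ S) : 𝔼 i ∈ s, u i ∈ S := by
  rw [expect_eq_centerMass]
  exact hS.centerMass_mem (fun _ _ => zero_le_one) (by simpa using hs) hu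

lemma map_expect_le_of_convexOn {φ : E → ℝ} (hφ : ConvexOn ℝ S φ) (hs : s.Nonempty)
    (hu : ∀ i ∈ s, u i ∈ S) : φ (𝔼 i ∈ s, u i) ≤ 𝔼 i ∈ s, φ (u i) := by
  rw [expect_eq_centerMass, expect_eq_centerMass]
  exact hφ.map_centerMass_le (fun _ _ => zero_le_one) (by simpa using hs) hu

variable {μ : Type*} {x γ : ℕ → μ → ℝ} {H : μ → ℕ → ℝ} {n : ℕ}

lemma expect_add_queue_div (hH : ∀ m, IsEqualityQueue (fun t => γ t m - x t m) (H m)) (n : ℕ) :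
    𝔼 t ∈ range n, x t + (fun m => H m n / n) = 𝔼 t ∈ range n, γ t := by
  funext m
  rw [Pi.add_apply, ← (hH m).expect_eq, expect_apply, expect_apply, expect_sub_distrib,
    add_sub_cancel]

theorem expect_add_map_expect_le [Fintype μ] {S : Set (μ → ℝ)} {φ : (μ → ℝ) → ℝ} {β : μ → ℝ}
    {y z : ℕ → ℝ} {R : ℝ} (hφ : ConvexOn ℝ S φ) (hβ : ∀ m, 0 ≤ β m)
    (hlip : ∀ v w, v ∈ S → v + w ∈ S → φ (v + w) ≤ φ v + ∑ m, β m * |w m|)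
    (hx : ∀ t, x t ∈ S) (hγ : ∀ t, γ t ∈ S) (hz : IsInequalityQueue (fun t => y t + φ (γ t)) z)
    (hH : ∀ m, IsEqualityQueue (fun t => γ t m - x t m) (H m)) (hn : 0 < n)
    (hzR : z n / n ≤ R) (hHR : ∀ m, |H m n / n| ≤ R) :
    𝔼 t ∈ range n, y t + φ (𝔼 t ∈ range n, x t) ≤ R * (1 + ∑ m, β m) := by
  have hrange : (range n).Nonempty := nonempty_range_iff.2 hn.ne'
  have hx_eq : 𝔼 t ∈ range n, x t = 𝔼 t ∈ range n, γ t + -(fun m => H m n / n) := by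
    rw [← expect_add_queue_div hH, add_neg_cancel_right]
  have hx_mem : 𝔼 t ∈ range n, x t ∈ S := expect_mem_of_convex hφ.1 hrange fun t _ => hx t
  have hγ_mem : 𝔼 t ∈ range n, γ t ∈ S := expect_mem_of_convex hφ.1 hrange fun t _ => hγ t
  have hdist : φ (𝔼 t ∈ range n, x t) ≤ φ (𝔼 t ∈ range n, γ t) + ∑ m, β m * |H m n / n| := by
    rw [hx_eq] at hx_mem ⊢
    simpa only [Pi.neg_apply, abs_neg] using hlip _ _ hγ_mem hx_mem
  calc 𝔼 t ∈ range n, y t + φ (𝔼 t ∈ range n, x t)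
      ≤ 𝔼 t ∈ range n, y t + (𝔼 t ∈ range n, φ (γ t) + ∑ m, β m * |H m n / n|) := by
        grw [hdist, map_expect_le_of_convexOn hφ hrange fun t _ => hγ t]
    _ = 𝔼 t ∈ range n, (y t + φ (γ t)) + ∑ m, β m * |H m n / n| := by
        rw [expect_add_distrib, add_assoc]
    _ ≤ R + ∑ m, β m * R := by
        gcongr with m
        exacts [(hz.expect_le n).trans hzR, hβ m, hHR m]
    _ = R * (1 + ∑ m, β m) := by rw [← sum_mul]; ring

end TimeAverages

section DriftPlusPenalty

variable {Ω Act : Type*} {K M L : ℕ} {ahat bhat : Fin K → Act → Ω → ℝ}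
  {xhat : Fin M → Act → Ω → ℝ} {y0hat : Act → Ω → ℝ} {yhat : Fin L → Act → Ω → ℝ}
  {f : (Fin M → ℝ) → ℝ} {g : Fin L → (Fin M → ℝ) → ℝ}
  {w : Ω} {Zv : Fin L → ℝ} {Qv : Fin K → ℝ} {Hv : Fin M → ℝ} {a a' : Act} {γ : Fin M → ℝ}
  {V C y0min y0max fmin fmax : ℝ}

lemma driftExpr_le_penalty_of_feasible (hZv : ∀ l, 0 ≤ Zv l) (hQv : ∀ k, 0 ≤ Qv k)
    (hy : ∀ l, yhat l a w + g l (fun m => xhat m a w) ≤ 0)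
    (hab : ∀ k, ahat k a w ≤ bhat k a w) :
    driftExpr ahat bhat xhat y0hat yhat g f V w Zv Qv Hv a (fun m => xhat m a w)
      ≤ V * (y0hat a w + f (fun m => xhat m a w)) := by
  have hZsum : ∑ l, Zv l * (yhat l a w + g l (fun m => xhat m a w)) ≤ 0 :=
    sum_nonpos fun l _ => mul_nonpos_of_nonneg_of_nonpos (hZv l) (hy l)
  have hQsum : ∑ k, Qv k * (ahat k a w - bhat k a w) ≤ 0 :=
    sum_nonpos fun k _ => mul_nonpos_of_nonneg_of_nonpos (hQv k) (sub_nonpos.2 (hab k))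
  simp only [driftExpr, sub_self, mul_zero, sum_const_zero]
  linarith

lemma drift_le_of_driftExpr_le (hV : 0 ≤ V)
    (hE : driftExpr ahat bhat xhat y0hat yhat g f V w Zv Qv Hv a γ
      ≤ V * (y0hat a' w + f (fun m => xhat m a' w)) + C)
    (hy0 : y0min ≤ y0hat a w) (hf : fmin ≤ f γ)
    (hy0' : y0hat a' w ≤ y0max) (hf' : f (fun m => xhat m a' w) ≤ fmax) :
    ∑ l, Zv l * (yhat l a w + g l γ) + ∑ k, Qv k * (ahat k a w - bhat k a w)
        + ∑ m, Hv m * (γ m - xhat m a w)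
      ≤ C + V * ((y0max - y0min) + (fmax - fmin)) := by
  have hpenalty : V * (y0min + fmin) ≤ V * (y0hat a w + f γ) := by gcongr
  have hpenalty' : V * (y0hat a' w + f (fun m => xhat m a' w)) ≤ V * (y0max + fmax) := by gcongr
  unfold driftExpr at hE
  linarith

lemma sqrt_mul_div_add_mul_sqrt_div {s : ℝ} (hV : 0 < V) (hs : 0 ≤ s) (r b c : ℝ) :
    √(r * (b / V + c)) * √(V / s) = √(r * (b + V * c) / s) := by
  rw [← Real.sqrt_mul' _ (by positivity)]
  congr 1
  field_simp

end DriftPlusPenalty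

theorem stmt_4_general
    {Ω Act : Type*} {ω : ℕ → Ω} {A : Ω → Set Act} {K M L : ℕ}
    {ahat bhat : Fin K → Act → Ω → ℝ} {xhat : Fin M → Act → Ω → ℝ}
    {y0hat : Act → Ω → ℝ} {yhat : Fin L → Act → Ω → ℝ} {y0min y0max : ℝ} {S : Set (Fin M → ℝ)}
    (hahat : ∀ w, ∀ a' ∈ A w, ∀ k, 0 ≤ ahat k a' w)
    (hbhat : ∀ w, ∀ a' ∈ A w, ∀ k, 0 ≤ bhat k a' w)
    (hxhat : ∀ w, ∀ a' ∈ A w, (fun m => xhat m a' w) ∈ S)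
    (hy0hat : ∀ w, ∀ a' ∈ A w, y0min ≤ y0hat a' w ∧ y0hat a' w ≤ y0max)
    {X : Set (Fin M → ℝ)} (hX : Convex ℝ X)
    {f : (Fin M → ℝ) → ℝ} {g : Fin L → (Fin M → ℝ) → ℝ} {fmin fmax : ℝ} {β : Fin L → Fin M → ℝ}
    (hf : ∀ x ∈ S, fmin ≤ f x ∧ f x ≤ fmax)
    (hg : ∀ l, ConvexOn ℝ S (g l)) (hβ : ∀ l m, 0 ≤ β l m)
    (hlip : ∀ l x y, x ∈ S → x + y ∈ S → g l (x + y) ≤ g l x + ∑ m, β l m * |y m|)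
    (hfeasible : ∀ t, ∃ a' ∈ A (ω t),
      (∀ l, yhat l a' (ω t) + g l (fun m => xhat m a' (ω t)) ≤ 0) ∧
      (∀ k, ahat k a' (ω t) ≤ bhat k a' (ω t)) ∧ (fun m => xhat m a' (ω t)) ∈ X)
    {V C B : ℝ} (hV : 0 ≤ V)
    (hB : ∀ t a' γ', a' ∈ A (ω t) → γ' ∈ X → γ' ∈ S →
      1 / 2 * ∑ l, (yhat l a' (ω t) + g l γ') ^ 2
        + 1 / 2 * ∑ k, (bhat k a' (ω t) ^ 2 + ahat k a' (ω t) ^ 2)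
        + 1 / 2 * ∑ m, (γ' m - xhat m a' (ω t)) ^ 2 ≤ B)
    {α : ℕ → Act} {γ : ℕ → Fin M → ℝ}
    (hα : ∀ t, α t ∈ A (ω t)) (hγX : ∀ t, γ t ∈ X) (hγS : ∀ t, γ t ∈ S)
    {Q : Fin K → ℕ → ℝ} {Z : Fin L → ℕ → ℝ} {H : Fin M → ℕ → ℝ}
    (hQ : ∀ k, IsQueue (fun t => ahat k (α t) (ω t)) (fun t => bhat k (α t) (ω t)) (Q k))
    (hZ : ∀ l, IsInequalityQueue (fun t => yhat l (α t) (ω t) + g l (γ t)) (Z l))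
    (hH : ∀ m, IsEqualityQueue (fun t => γ t m - xhat m (α t) (ω t)) (H m))
    (hCapprox : ∀ t a' γ', a' ∈ A (ω t) → γ' ∈ X → γ' ∈ S →
      driftExpr ahat bhat xhat y0hat yhat g f V (ω t) (Z · t) (Q · t) (H · t) (α t) (γ t)
        ≤ driftExpr ahat bhat xhat y0hat yhat g f V (ω t) (Z · t) (Q · t) (H · t) a' γ' + C)
    {n : ℕ} (hn : 0 < n) {R : ℝ}
    (hR : R = √(2 * (B + C + V * ((y0max - y0min) + (fmax - fmin))) / n)) :
    (∀ l, 𝔼 t ∈ range n, yhat l (α t) (ω t)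
        + g l (fun m => 𝔼 t ∈ range n, xhat m (α t) (ω t)) ≤ R * (1 + ∑ m, β l m)) ∧
    (∀ k, 𝔼 t ∈ range n, ahat k (α t) (ω t) ≤ 𝔼 t ∈ range n, bhat k (α t) (ω t) + R) ∧
    ∃ ε : Fin M → ℝ, (∀ m, |ε m| ≤ R) ∧ (fun m => 𝔼 t ∈ range n, xhat m (α t) (ω t)) + ε ∈ X := by
  have ha (k t) : 0 ≤ ahat k (α t) (ω t) := hahat _ _ (hα t) k
  have hb (k t) : 0 ≤ bhat k (α t) (ω t) := hbhat _ _ (hα t) k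
  have hstep (t : ℕ) : lyapunov Z Q H (t + 1)
      ≤ lyapunov Z Q H t + (B + C + V * ((y0max - y0min) + (fmax - fmin))) := by
    obtain ⟨a', ha', hy, hab, hxX⟩ := hfeasible t
    have hxS := hxhat _ a' ha'
    have hcomparison := driftExpr_le_penalty_of_feasible (y0hat := y0hat) (f := f) (V := V)
      (Hv := (H · t)) (fun l => (hZ l).nonneg t) (fun k => (hQ k).nonneg (ha k) t) hy hab
    have hdrift := drift_le_of_driftExpr_le hV
      ((hCapprox t a' _ ha' hxX hxS).trans (add_le_add_left hcomparison C))
      (hy0hat _ _ (hα t)).1 (hf _ (hγS t)).1 (hy0hat _ _ ha').2 (hf _ hxS).2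
    linarith [lyapunov_succ_le hZ hQ hH ha hb t, hB t _ _ (hα t) (hγX t) (hγS t)]
  have hlyapunov := lyapunov_le_nat_mul (fun l => (hZ l).zero) (fun k => (hQ k).zero)
    (fun m => (hH m).zero) hstep n
  obtain ⟨hZR, hQR, hHR⟩ := abs_queue_div_le_of_lyapunov_le hn hlyapunov
  rw [← hR] at hZR hQR hHR
  have hx_avg : (fun m => 𝔼 t ∈ range n, xhat m (α t) (ω t))
      = 𝔼 t ∈ range n, fun m => xhat m (α t) (ω t) := by
    funext m
    rw [expect_apply]
  rw [hx_avg]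
  refine ⟨fun l => ?_, fun k => ?_, fun m => H m n / n, hHR, ?_⟩
  · exact expect_add_map_expect_le (hg l) (hβ l) (hlip l) (fun t => hxhat _ _ (hα t)) hγS (hZ l) hH
      hn (le_of_abs_le (hZR l)) hHR
  · grw [(hQ k).expect_le n, le_of_abs_le (hQR k)]
  · rw [expect_add_queue_div hH]
    exact expect_mem_of_convex hX (nonempty_range_iff.2 hn.ne') fun t _ => hγX t

/-- Theorem 1(b): under Assumptions A1 and A2, a `C`-approximate policy started from
empty queues satisfies, for any `t_end > 0`:
`ȳ_l + g_l(x̄) ≤ C₀√(V/t_end)[1 + Σ_m β_{l,m}]` for every `l`,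
`ā_k ≤ b̄_k + C₀√(V/t_end)` for every `k`, and there is `ε` with
`|ε_m| ≤ C₀√(V/t_end)` such that `x̄ + ε ∈ X`. -/
theorem stmt_4
    {Ω Act : Type*} (ω : ℕ → Ω) (A : Ω → Set Act) (hAne : ∀ w, (A w).Nonempty)
    (K M L : ℕ) (hK : 0 < K) (hM : 0 < M) (hL : 0 < L)
    (ahat bhat : Fin K → Act → Ω → ℝ) (xhat : Fin M → Act → Ω → ℝ)
    (y0hat : Act → Ω → ℝ) (yhat : Fin L → Act → Ω → ℝ)
    (amax bmax : Fin K → ℝ) (xmin xmax : Fin M → ℝ)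
    (y0min y0max : ℝ) (ymin ymax : Fin L → ℝ)
    -- Assumption A1 (boundedness)
    (hA1a : ∀ (w : Ω) (a' : Act), a' ∈ A w → ∀ k, 0 ≤ ahat k a' w ∧ ahat k a' w ≤ amax k)
    (hA1b : ∀ (w : Ω) (a' : Act), a' ∈ A w → ∀ k, 0 ≤ bhat k a' w ∧ bhat k a' w ≤ bmax k)
    (hA1x : ∀ (w : Ω) (a' : Act), a' ∈ A w → ∀ m, xmin m ≤ xhat m a' w ∧ xhat m a' w ≤ xmax m)
    (hA1y0 : ∀ (w : Ω) (a' : Act), a' ∈ A w → y0min ≤ y0hat a' w ∧ y0hat a' w ≤ y0max)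
    (hA1y : ∀ (w : Ω) (a' : Act), a' ∈ A w → ∀ l, ymin l ≤ yhat l a' w ∧ yhat l a' w ≤ ymax l)
    -- the convex set X and the cost functions f, g_l on the box
    (X : Set (Fin M → ℝ)) (hX : Convex ℝ X)
    (f : (Fin M → ℝ) → ℝ) (g : Fin L → (Fin M → ℝ) → ℝ)
    (fmin fmax : ℝ) (gmin gmax : Fin L → ℝ) (β : Fin L → Fin M → ℝ)
    (hβ : ∀ l m, 0 ≤ β l m)
    (hfconv : ConvexOn ℝ {x : Fin M → ℝ | ∀ m, xmin m ≤ x m ∧ x m ≤ xmax m} f)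
    (hfcont : ContinuousOn f {x : Fin M → ℝ | ∀ m, xmin m ≤ x m ∧ x m ≤ xmax m})
    (hfbd : ∀ x ∈ {x : Fin M → ℝ | ∀ m, xmin m ≤ x m ∧ x m ≤ xmax m},
      fmin ≤ f x ∧ f x ≤ fmax)
    (hgconv : ∀ l, ConvexOn ℝ {x : Fin M → ℝ | ∀ m, xmin m ≤ x m ∧ x m ≤ xmax m} (g l))
    (hgcont : ∀ l, ContinuousOn (g l) {x : Fin M → ℝ | ∀ m, xmin m ≤ x m ∧ x m ≤ xmax m})
    (hgbd : ∀ l, ∀ x ∈ {x : Fin M → ℝ | ∀ m, xmin m ≤ x m ∧ x m ≤ xmax m},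
      gmin l ≤ g l x ∧ g l x ≤ gmax l)
    (hglip : ∀ (l : Fin L) (x y : Fin M → ℝ),
      (∀ m, xmin m ≤ x m ∧ x m ≤ xmax m) →
      (∀ m, xmin m ≤ x m + y m ∧ x m + y m ≤ xmax m) →
      g l (x + y) ≤ g l x + ∑ m, β l m * |y m|)
    -- Assumption A2
    (hA2 : ∀ t, ∃ a' ∈ A (ω t),
      (∀ l, yhat l a' (ω t) + g l (fun m => xhat m a' (ω t)) ≤ 0) ∧
      (∀ k, ahat k a' (ω t) ≤ bhat k a' (ω t)) ∧
      (fun m => xhat m a' (ω t)) ∈ X)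
    -- parameters
    (V C B : ℝ) (hV : 0 < V) (hC : 0 ≤ C)
    (hB : ∀ (t : ℕ) (a' : Act) (γ' : Fin M → ℝ), a' ∈ A (ω t) → γ' ∈ X →
      (∀ m, xmin m ≤ γ' m ∧ γ' m ≤ xmax m) →
      (1 / 2) * ∑ l, (yhat l a' (ω t) + g l γ') ^ 2
        + (1 / 2) * ∑ k, ((bhat k a' (ω t)) ^ 2 + (ahat k a' (ω t)) ^ 2)
        + (1 / 2) * ∑ m, (γ' m - xhat m a' (ω t)) ^ 2 ≤ B)
    -- the C-approximate policy and the queues (initially empty)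
    (α : ℕ → Act) (γ : ℕ → Fin M → ℝ)
    (hα : ∀ t, α t ∈ A (ω t)) (hγX : ∀ t, γ t ∈ X)
    (hγbox : ∀ t m, xmin m ≤ γ t m ∧ γ t m ≤ xmax m)
    (Q : Fin K → ℕ → ℝ) (Z : Fin L → ℕ → ℝ) (H : Fin M → ℕ → ℝ)
    (hQ0 : ∀ k, Q k 0 = 0) (hZ0 : ∀ l, Z l 0 = 0) (hH0 : ∀ m, H m 0 = 0)
    (hQ : ∀ k t, Q k (t + 1) = max (Q k t - bhat k (α t) (ω t)) 0 + ahat k (α t) (ω t))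
    (hZ : ∀ l t, Z l (t + 1) = max (Z l t + yhat l (α t) (ω t) + g l (γ t)) 0)
    (hH : ∀ m t, H m (t + 1) = H m t + γ t m - xhat m (α t) (ω t))
    (hCapprox : ∀ (t : ℕ) (a' : Act) (γ' : Fin M → ℝ), a' ∈ A (ω t) → γ' ∈ X →
      (∀ m, xmin m ≤ γ' m ∧ γ' m ≤ xmax m) →
      driftExpr ahat bhat xhat y0hat yhat g f V (ω t)
          (fun l => Z l t) (fun k => Q k t) (fun m => H m t) (α t) (γ t)
        ≤ driftExpr ahat bhat xhat y0hat yhat g f V (ω t)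
          (fun l => Z l t) (fun k => Q k t) (fun m => H m t) a' γ' + C)
    -- the constant C₀
    (C₀ : ℝ)
    (hC₀ : C₀ = Real.sqrt (2 * ((B + C) / V + (y0max - y0min) + (fmax - fmin))))
    (tend : ℕ) (htend : 0 < tend) :
    (∀ l, (∑ τ ∈ Finset.range tend, yhat l (α τ) (ω τ)) / tend
        + g l (fun m => (∑ τ ∈ Finset.range tend, xhat m (α τ) (ω τ)) / tend)
        ≤ C₀ * Real.sqrt (V / tend) * (1 + ∑ m, β l m)) ∧
    (∀ k, (∑ τ ∈ Finset.range tend, ahat k (α τ) (ω τ)) / tend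
        ≤ (∑ τ ∈ Finset.range tend, bhat k (α τ) (ω τ)) / tend
          + C₀ * Real.sqrt (V / tend)) ∧
    (∃ ε : Fin M → ℝ, (∀ m, |ε m| ≤ C₀ * Real.sqrt (V / tend)) ∧
      ((fun m => (∑ τ ∈ Finset.range tend, xhat m (α τ) (ω τ)) / tend) + ε) ∈ X) := by
  simpa only [expect_eq_sum_div_card, card_range] using
    stmt_4_general (S := {x | ∀ m, xmin m ≤ x m ∧ x m ≤ xmax m}) (R := C₀ * √(V / tend))
      (fun w a' ha' k => (hA1a w a' ha' k).1) (fun w a' ha' k => (hA1b w a' ha' k).1) hA1x hA1y0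
      hX hfbd hgconv hβ hglip hA2 hV.le hB hα hγX hγbox (fun k => ⟨hQ0 k, hQ k⟩)
      (fun l => ⟨hZ0 l, fun t => by rw [hZ, add_assoc]⟩)
      (fun m => ⟨hH0 m, fun t => by rw [hH, add_sub_assoc]⟩) hCapprox htend
      (by rw [hC₀, add_assoc, sqrt_mul_div_add_mul_sqrt_div hV tend.cast_nonneg])
end

section
/- Suppose Assumptions A1 and A2 hold, V > 0, and a C-approximate policy is run against an arbitrary event sequence. For any positive integers T and R, with t_end = RT, the time averages over the first t_end slots satisfy: ȳ₀ + f(x̄) ≤ (1/R)Σ_{r=0}^{R−1} F_r^* + (B + C)/V + D(T − 1)/V + L(Θ(0))/(VRT) + Σ_{m=1}^M ν_m|H_m(RT) − H_m(0)|/(RT). Moreover, if all initial queue backlogs are 0, then the final term satisfies Σ_{m=1}^M ν_m|H_m(RT) − H_m(0)|/(RT) ≤ Σ_{m=1}^M ν_m C₀√(V/(RT)), where C₀ = √(2[(B + C)/V + (y₀^max − y₀^min) + (f^max − f^min)]). -/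
/-- `F_r^*`: the infimum cost achievable over the `r`-th frame of size `T` by a
`T`-slot lookahead policy that satisfies all constraints over the frame. -/
noncomputable def FrStar {Act Ω : Type*} {K M L : ℕ} (ω : ℕ → Ω) (A : Ω → Set Act)
    (ahat bhat : Fin K → Act → Ω → ℝ) (xhat : Fin M → Act → Ω → ℝ)
    (y0hat : Act → Ω → ℝ) (yhat : Fin L → Act → Ω → ℝ)
    (g : Fin L → (Fin M → ℝ) → ℝ) (f : (Fin M → ℝ) → ℝ)
    (X : Set (Fin M → ℝ)) (T r : ℕ) : ℝ :=
  sInf {c : ℝ | ∃ a : ℕ → Act,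
    (∀ τ ∈ Finset.Ico (r * T) ((r + 1) * T), a τ ∈ A (ω τ)) ∧
    (∀ l, (∑ τ ∈ Finset.Ico (r * T) ((r + 1) * T), yhat l (a τ) (ω τ)) / T
        + g l (fun m => (∑ τ ∈ Finset.Ico (r * T) ((r + 1) * T), xhat m (a τ) (ω τ)) / T)
        ≤ 0) ∧
    (fun m => (∑ τ ∈ Finset.Ico (r * T) ((r + 1) * T), xhat m (a τ) (ω τ)) / T) ∈ X ∧
    (∀ k, (∑ τ ∈ Finset.Ico (r * T) ((r + 1) * T),
        (ahat k (a τ) (ω τ) - bhat k (a τ) (ω τ))) / T ≤ 0) ∧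
    c = (∑ τ ∈ Finset.Ico (r * T) ((r + 1) * T), y0hat (a τ) (ω τ)) / T
        + f (fun m => (∑ τ ∈ Finset.Ico (r * T) ((r + 1) * T), xhat m (a τ) (ω τ)) / T)}

/-!
In one slot the drift of the Lyapunov function plus `V` times the cost is at most `B + E_t`. Compare
the `C`-approximate decision with the one that takes the action of a lookahead policy and sets `γ`
to the frame average of its `x`. Had the backlogs stayed as they were at the start of the frame,
the constraints on the frame, weighted by the nonnegative backlogs, would cancel or make
nonpositive every queue term of `∑ E_t`. Since the backlogs move by bounded amounts, the error after
`n` slots is at most `2nD`, and these errors add up to `T(T-1)D` over a frame. Telescoping over the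
frames bounds the average cost.

For the second claim the comparison is with the action of Assumption A2, for which the queue terms
of `E_t` are nonpositive slot by slot. The Lyapunov function, and with it each `H_m²`, therefore
grows at most linearly.
-/

section ScalarQueue

lemma sq_max_sub_zero_add_le {q a b : ℝ} (hq : 0 ≤ q) (ha : 0 ≤ a) (hb : 0 ≤ b) :
    (max (q - b) 0 + a) ^ 2 ≤ q ^ 2 + (b ^ 2 + a ^ 2) + 2 * (q * (a - b)) := by
  rcases le_total (q - b) 0 with h | h
  · rw [max_eq_right h]
    nlinarith [mul_nonneg hq ha, sq_nonneg (q - b)]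
  · rw [max_eq_left h]
    nlinarith [mul_nonneg ha hb]

lemma sq_max_add_zero_le (z y : ℝ) : max (z + y) 0 ^ 2 ≤ z ^ 2 + y ^ 2 + 2 * (z * y) := by
  rcases le_total (z + y) 0 with h | h
  · rw [max_eq_right h]
    nlinarith [sq_nonneg (z + y)]
  · rw [max_eq_left h]
    exact (by ring : (z + y) ^ 2 = z ^ 2 + y ^ 2 + 2 * (z * y)).le

lemma abs_max_sub_zero_add_sub_le {q a b : ℝ} (hq : 0 ≤ q) (ha : 0 ≤ a) (hb : 0 ≤ b) :
    |max (q - b) 0 + a - q| ≤ max b a := by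
  have hlower : q - b ≤ max (q - b) 0 := le_max_left _ _
  have hupper : max (q - b) 0 ≤ q := max_le (by linarith) hq
  exact abs_le.2 ⟨by linarith [le_max_left b a], by linarith [le_max_right b a]⟩

lemma abs_max_add_zero_sub_le {z : ℝ} (y : ℝ) (hz : 0 ≤ z) : |max (z + y) 0 - z| ≤ |y| := by
  simpa [max_eq_left hz] using abs_max_sub_max_le_abs (z + y) z 0

end ScalarQueue

section FiniteFamilies

variable {ι : Type*} {s : Finset ι}

lemma sum_sq_le_of_forall_sq_le {u v d e : ι → ℝ}
    (h : ∀ i ∈ s, v i ^ 2 ≤ u i ^ 2 + e i + 2 * (u i * d i)) :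
    ∑ i ∈ s, v i ^ 2 ≤ ∑ i ∈ s, u i ^ 2 + ∑ i ∈ s, e i + 2 * ∑ i ∈ s, u i * d i := by
  simpa only [Finset.sum_add_distrib, Finset.mul_sum] using Finset.sum_le_sum h

lemma abs_sub_le_mul_of_abs_succ_sub_le {u : ℕ → ℝ} {c : ℝ}
    (h : ∀ t, |u (t + 1) - u t| ≤ c) {t τ : ℕ} (hτ : t ≤ τ) :
    |u τ - u t| ≤ ((τ : ℝ) - t) * c := by
  have hdist := dist_le_Ico_sum_of_dist_le hτ (f := u) (d := fun _ => c) fun {k} _ _ => by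
    rw [dist_comm]; exact h k
  rwa [dist_comm, Real.dist_eq, Finset.sum_const, Nat.card_Ico, nsmul_eq_mul,
    Nat.cast_sub hτ] at hdist

lemma sum_mul_le_sum_mul_add {u : ι → ℕ → ℝ} {c p q : ι → ℝ}
    (hu : ∀ i ∈ s, ∀ t, |u i (t + 1) - u i t| ≤ c i) (hp : ∀ i ∈ s, |p i| ≤ q i)
    {t τ : ℕ} (hτ : t ≤ τ) :
    ∑ i ∈ s, u i τ * p i ≤ ∑ i ∈ s, u i t * p i + ((τ : ℝ) - t) * ∑ i ∈ s, c i * q i := by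
  rw [Finset.mul_sum, ← Finset.sum_add_distrib]
  refine Finset.sum_le_sum fun i hi => ?_
  have hvar := abs_sub_le_mul_of_abs_succ_sub_le (hu i hi) hτ
  have hmul : (u i τ - u i t) * p i ≤ ((τ : ℝ) - t) * c i * q i :=
    calc (u i τ - u i t) * p i ≤ |u i τ - u i t| * |p i| := by
          rw [← abs_mul]; exact le_abs_self _
      _ ≤ ((τ : ℝ) - t) * c i * q i :=
          mul_le_mul hvar (hp i hi) (abs_nonneg _) ((abs_nonneg _).trans hvar)
  linarith

lemma sum_div_card_eq_sum_smul {κ : Type*} (s : Finset ι) (x : ι → κ → ℝ) :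
    (fun k => (∑ i ∈ s, x i k) / s.card) = ∑ i ∈ s, (s.card : ℝ)⁻¹ • x i := by
  ext k
  simp only [Finset.sum_apply, Pi.smul_apply, smul_eq_mul, ← Finset.mul_sum, div_eq_inv_mul]

lemma sum_inv_card (hs : s.Nonempty) : ∑ _i ∈ s, (s.card : ℝ)⁻¹ = 1 := by
  rw [Finset.sum_const, nsmul_eq_mul, mul_inv_cancel₀ (by exact_mod_cast hs.card_ne_zero)]

lemma sum_div_card_mem_of_convex {κ : Type*} {S : Set (κ → ℝ)} (hS : Convex ℝ S)
    (hs : s.Nonempty) {x : ι → κ → ℝ} (hx : ∀ i ∈ s, x i ∈ S) :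
    (fun k => (∑ i ∈ s, x i k) / s.card) ∈ S := by
  rw [sum_div_card_eq_sum_smul]
  exact hS.sum_mem (fun _ _ => by positivity) (sum_inv_card hs) hx

lemma map_sum_div_card_le_of_convexOn {κ : Type*} {S : Set (κ → ℝ)} {φ : (κ → ℝ) → ℝ}
    (hφ : ConvexOn ℝ S φ) (hs : s.Nonempty) {x : ι → κ → ℝ} (hx : ∀ i ∈ s, x i ∈ S) :
    φ (fun k => (∑ i ∈ s, x i k) / s.card) ≤ (∑ i ∈ s, φ (x i)) / s.card := by
  rw [sum_div_card_eq_sum_smul, div_eq_inv_mul, Finset.mul_sum]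
  exact hφ.map_sum_le (fun _ _ => by positivity) (sum_inv_card hs) hx

end FiniteFamilies

/-- The product of the intervals `[lo i, hi i]`, the domain of the cost functions. It is written
coordinatewise, as in the hypotheses of the theorem, rather than as `Set.Icc lo hi`. -/
def box {ι : Type*} (lo hi : ι → ℝ) : Set (ι → ℝ) :=
  {x | ∀ i, lo i ≤ x i ∧ x i ≤ hi i}

lemma convex_box {ι : Type*} (lo hi : ι → ℝ) : Convex ℝ (box lo hi) := by
  have hIcc : box lo hi = Set.Icc lo hi := by
    ext x
    exact forall_and
  exact hIcc ▸ convex_Icc lo hi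

/-- The `r`-th frame of `T` consecutive slots. -/
def frame (T r : ℕ) : Finset ℕ :=
  Finset.Ico (r * T) ((r + 1) * T)

/-- The average of `u` over the `r`-th frame of size `T`; it is `0` when `T = 0`. -/
noncomputable def frameAvg (T r : ℕ) (u : ℕ → ℝ) : ℝ :=
  (∑ τ ∈ frame T r, u τ) / T

section Frames

variable {T : ℕ}

lemma card_frame (T r : ℕ) : (frame T r).card = T := by
  rw [frame, Nat.card_Ico, add_one_mul, Nat.add_sub_cancel_left]

lemma frame_nonempty (hT : 0 < T) (r : ℕ) : (frame T r).Nonempty :=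
  Finset.card_pos.1 (by rwa [card_frame])

lemma mul_frameAvg (hT : 0 < T) (r : ℕ) (u : ℕ → ℝ) :
    T * frameAvg T r u = ∑ τ ∈ frame T r, u τ :=
  mul_div_cancel₀ _ (by exact_mod_cast hT.ne')

lemma frameAvg_nonpos {r : ℕ} {u : ℕ → ℝ} (h : ∀ τ ∈ frame T r, u τ ≤ 0) :
    frameAvg T r u ≤ 0 :=
  div_nonpos_of_nonpos_of_nonneg (Finset.sum_nonpos h) T.cast_nonneg

lemma frameAvg_const (hT : 0 < T) (r : ℕ) (c : ℝ) : frameAvg T r (fun _ => c) = c := by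
  rw [frameAvg, Finset.sum_const, card_frame, nsmul_eq_mul,
    mul_div_cancel_left₀ _ (by exact_mod_cast hT.ne')]

lemma frameAvg_add (r : ℕ) (u v : ℕ → ℝ) :
    frameAvg T r (fun τ => u τ + v τ) = frameAvg T r u + frameAvg T r v := by
  simp only [frameAvg, Finset.sum_add_distrib, add_div]

lemma sum_frame_sum_mul_nonpos {ι : Type*} {s : Finset ι} (hT : 0 < T) {r : ℕ} {w : ι → ℝ}
    {p : ℕ → ι → ℝ} (hw : ∀ i ∈ s, 0 ≤ w i) (hp : ∀ i ∈ s, frameAvg T r (fun τ => p τ i) ≤ 0) :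
    ∑ τ ∈ frame T r, ∑ i ∈ s, w i * p τ i ≤ 0 := by
  rw [Finset.sum_comm]
  refine Finset.sum_nonpos fun i hi => ?_
  rw [← Finset.mul_sum, ← mul_frameAvg hT]
  exact mul_nonpos_of_nonneg_of_nonpos (hw i hi)
    (mul_nonpos_of_nonneg_of_nonpos T.cast_nonneg (hp i hi))

lemma sum_range_sum_frame (u : ℕ → ℝ) (R : ℕ) :
    ∑ r ∈ Finset.range R, ∑ τ ∈ frame T r, u τ = ∑ τ ∈ Finset.range (R * T), u τ := by
  induction R with
  | zero => simp
  | succ R ih =>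
    rw [Finset.sum_range_succ, ih, frame,
      Finset.sum_range_add_sum_Ico _ (Nat.mul_le_mul_right T R.le_succ)]

lemma sum_frame_sub_start (r : ℕ) :
    ∑ τ ∈ frame T r, 2 * ((τ : ℝ) - (r * T : ℕ)) = T * ((T : ℝ) - 1) := by
  have hgauss : (∑ i ∈ Finset.range T, (i : ℝ)) * 2 = T * ((T : ℝ) - 1) := by
    induction T with
    | zero => simp
    | succ n ih => rw [Finset.sum_range_succ, add_mul, ih]; push_cast; ring
  rw [frame, Finset.sum_Ico_eq_sum_range, add_one_mul, Nat.add_sub_cancel_left, ← Finset.mul_sum,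
    mul_comm, ← hgauss]
  simp only [Nat.cast_add, add_sub_cancel_left]

lemma sum_frame_succ_sub (u : ℕ → ℝ) (r : ℕ) :
    ∑ τ ∈ frame T r, (u (τ + 1) - u τ) = u ((r + 1) * T) - u (r * T) :=
  Finset.sum_Ico_sub u (Nat.mul_le_mul_right T r.le_succ)

end Frames

/-- A network optimization problem with its standing hypotheses: for each event an action set, the
per-slot attributes as functions of action and event, the constraint set `X`, the convex costs
`f` and `g`, the bounds of Assumption A1 and the Lipschitz weights `ν` of `f`. -/
structure Network (Ω Act : Type*) (K M L : ℕ) where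
  A : Ω → Set Act
  ahat : Fin K → Act → Ω → ℝ
  bhat : Fin K → Act → Ω → ℝ
  xhat : Fin M → Act → Ω → ℝ
  y0hat : Act → Ω → ℝ
  yhat : Fin L → Act → Ω → ℝ
  amax : Fin K → ℝ
  bmax : Fin K → ℝ
  xmin : Fin M → ℝ
  xmax : Fin M → ℝ
  y0min : ℝ
  y0max : ℝ
  ymin : Fin L → ℝ
  ymax : Fin L → ℝ
  ahat_bounds : ∀ w, ∀ a ∈ A w, ∀ k, 0 ≤ ahat k a w ∧ ahat k a w ≤ amax k
  bhat_bounds : ∀ w, ∀ a ∈ A w, ∀ k, 0 ≤ bhat k a w ∧ bhat k a w ≤ bmax k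
  xhat_bounds : ∀ w, ∀ a ∈ A w, ∀ m, xmin m ≤ xhat m a w ∧ xhat m a w ≤ xmax m
  y0hat_bounds : ∀ w, ∀ a ∈ A w, y0min ≤ y0hat a w ∧ y0hat a w ≤ y0max
  yhat_bounds : ∀ w, ∀ a ∈ A w, ∀ l, ymin l ≤ yhat l a w ∧ yhat l a w ≤ ymax l
  X : Set (Fin M → ℝ)
  convex_X : Convex ℝ X
  f : (Fin M → ℝ) → ℝ
  g : Fin L → (Fin M → ℝ) → ℝ
  fmin : ℝ
  fmax : ℝ
  gmin : Fin L → ℝ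
  gmax : Fin L → ℝ
  ν : Fin M → ℝ
  ν_nonneg : ∀ m, 0 ≤ ν m
  convexOn_f : ConvexOn ℝ (box xmin xmax) f
  f_bounds : ∀ x ∈ box xmin xmax, fmin ≤ f x ∧ f x ≤ fmax
  f_add_le : ∀ x y, x ∈ box xmin xmax → x + y ∈ box xmin xmax →
    f (x + y) ≤ f x + ∑ m, ν m * |y m|
  convexOn_g : ∀ l, ConvexOn ℝ (box xmin xmax) (g l)
  g_bounds : ∀ l, ∀ x ∈ box xmin xmax, gmin l ≤ g l x ∧ g l x ≤ gmax l

namespace Network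

variable {Ω Act : Type*} {K M L : ℕ} (P : Network Ω Act K M L)

/-- The pair `(a, γ)` is an admissible decision in a slot with event `w`. -/
structure Feasible (w : Ω) (a : Act) (γ : Fin M → ℝ) : Prop where
  action_mem : a ∈ P.A w
  mem_X : γ ∈ P.X
  mem_box : γ ∈ box P.xmin P.xmax

/-- The action `a` satisfies all the constraints within a single slot with event `w`, as required
of some action by Assumption A2. -/
structure SlotFeasible (w : Ω) (a : Act) : Prop where
  action_mem : a ∈ P.A w
  yhat_add_g_nonpos : ∀ l, P.yhat l a w + P.g l (fun m => P.xhat m a w) ≤ 0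
  ahat_le_bhat : ∀ k, P.ahat k a w ≤ P.bhat k a w
  xhat_mem : (fun m => P.xhat m a w) ∈ P.X

/-- Half the total squared queue increments under the decision `(a, γ)`; the constant `B` bounds
it. -/
noncomputable def secondMoment (w : Ω) (a : Act) (γ : Fin M → ℝ) : ℝ :=
  (1 / 2) * ∑ l, (P.yhat l a w + P.g l γ) ^ 2
    + (1 / 2) * ∑ k, (P.bhat k a w ^ 2 + P.ahat k a w ^ 2)
    + (1 / 2) * ∑ m, (γ m - P.xhat m a w) ^ 2

/-- The bound `z_l^diff` on the change of `Z l` in one slot. -/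
noncomputable def zdiff (l : Fin L) : ℝ :=
  max |P.ymax l + P.gmax l| |P.ymin l + P.gmin l|

/-- The bound `q_k^diff` on the change of `Q k` in one slot. -/
noncomputable def qdiff (k : Fin K) : ℝ :=
  max (P.bmax k) (P.amax k)

/-- The bound `h_m^diff` on the change of `H m` in one slot. -/
def hdiff (m : Fin M) : ℝ :=
  P.xmax m - P.xmin m

/-- The quantity that the constant `D` bounds: backlogs that are `n` slots old misjudge the drift of
`(a, γ)` by at most `2n` times this amount. -/
noncomputable def stalenessCost (w : Ω) (a : Act) (γ : Fin M → ℝ) : ℝ :=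
  (1 / 2) * ∑ l, P.zdiff l * |P.yhat l a w + P.g l γ|
    + ∑ m, P.hdiff m * |P.xhat m a w - γ m|
    + (1 / 2) * ∑ k, P.qdiff k * max (P.bhat k a w) (P.ahat k a w)

variable {P}

lemma Feasible.hdiff_nonneg {w : Ω} {a : Act} {γ : Fin M → ℝ} (h : P.Feasible w a γ) (m : Fin M) :
    0 ≤ P.hdiff m :=
  sub_nonneg.2 ((h.mem_box m).1.trans (h.mem_box m).2)

lemma SlotFeasible.feasible {w : Ω} {a : Act} (h : P.SlotFeasible w a) :
    P.Feasible w a (fun m => P.xhat m a w) :=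
  ⟨h.action_mem, h.xhat_mem, P.xhat_bounds w a h.action_mem⟩

section Lookahead

variable (P) (ω : ℕ → Ω) (T r : ℕ) (a : ℕ → Act)

/-- The average of `x` over the `r`-th frame under the actions `a`. -/
noncomputable def frameX (m : Fin M) : ℝ :=
  frameAvg T r fun τ => P.xhat m (a τ) (ω τ)

/-- The actions `a` form a `T`-slot lookahead policy on the `r`-th frame: they meet the constraints
in the definition of `F_r^*`, on average over the frame. -/
structure IsLookahead : Prop where
  action_mem : ∀ τ ∈ frame T r, a τ ∈ P.A (ω τ)
  yhat_add_g_nonpos : ∀ l,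
    frameAvg T r (fun τ => P.yhat l (a τ) (ω τ)) + P.g l (P.frameX ω T r a) ≤ 0
  frameX_mem : P.frameX ω T r a ∈ P.X
  ahat_sub_bhat_nonpos : ∀ k,
    frameAvg T r (fun τ => P.ahat k (a τ) (ω τ) - P.bhat k (a τ) (ω τ)) ≤ 0

/-- The cost over the `r`-th frame of the actions `a`, of which `F_r^*` is the infimum. -/
noncomputable def frameCost : ℝ :=
  frameAvg T r (fun τ => P.y0hat (a τ) (ω τ)) + P.f (P.frameX ω T r a)

/-- The optimal lookahead cost `F_r^*` of the network. -/
noncomputable def frameOpt : ℝ :=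
  FrStar ω P.A P.ahat P.bhat P.xhat P.y0hat P.yhat P.g P.f P.X T r

variable {P ω T r a}

lemma le_frameOpt {c : ℝ} (hex : ∃ a, P.IsLookahead ω T r a)
    (h : ∀ a, P.IsLookahead ω T r a → c ≤ P.frameCost ω T r a) : c ≤ P.frameOpt ω T r := by
  obtain ⟨a, ha⟩ := hex
  refine le_csInf ⟨_, a, ha.action_mem, ha.yhat_add_g_nonpos, ha.frameX_mem,
    ha.ahat_sub_bhat_nonpos, rfl⟩ ?_
  rintro _ ⟨a, hA, hy, hx, hab, rfl⟩
  exact h a ⟨hA, hy, hx, hab⟩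

lemma frameX_mem_of_convex (hT : 0 < T) {S : Set (Fin M → ℝ)} (hS : Convex ℝ S)
    (h : ∀ τ ∈ frame T r, (fun m => P.xhat m (a τ) (ω τ)) ∈ S) : P.frameX ω T r a ∈ S := by
  simpa only [card_frame, frameX, frameAvg] using!
    sum_div_card_mem_of_convex hS (frame_nonempty hT r) h

lemma map_frameX_le_of_convexOn (hT : 0 < T) {S : Set (Fin M → ℝ)} {φ : (Fin M → ℝ) → ℝ}
    (hφ : ConvexOn ℝ S φ) (h : ∀ τ ∈ frame T r, (fun m => P.xhat m (a τ) (ω τ)) ∈ S) :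
    φ (P.frameX ω T r a) ≤ frameAvg T r fun τ => φ fun m => P.xhat m (a τ) (ω τ) := by
  simpa only [card_frame, frameX, frameAvg] using!
    map_sum_div_card_le_of_convexOn hφ (frame_nonempty hT r) h

lemma IsLookahead.feasible (hT : 0 < T) (h : P.IsLookahead ω T r a) {τ : ℕ}
    (hτ : τ ∈ frame T r) : P.Feasible (ω τ) (a τ) (P.frameX ω T r a) where
  action_mem := h.action_mem τ hτ
  mem_X := h.frameX_mem
  mem_box := frameX_mem_of_convex hT (convex_box _ _) fun τ hτ =>
    P.xhat_bounds _ _ (h.action_mem τ hτ)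

lemma isLookahead_of_slotFeasible (hT : 0 < T)
    (h : ∀ τ ∈ frame T r, P.SlotFeasible (ω τ) (a τ)) : P.IsLookahead ω T r a where
  action_mem τ hτ := (h τ hτ).action_mem
  yhat_add_g_nonpos l := by
    have hjensen := map_frameX_le_of_convexOn hT (P.convexOn_g l) fun τ hτ =>
      (h τ hτ).feasible.mem_box
    refine (add_le_add_right hjensen _).trans ?_
    rw [← frameAvg_add]
    exact frameAvg_nonpos fun τ hτ => (h τ hτ).yhat_add_g_nonpos l
  frameX_mem := frameX_mem_of_convex hT P.convex_X fun τ hτ => (h τ hτ).xhat_mem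
  ahat_sub_bhat_nonpos k :=
    frameAvg_nonpos fun τ hτ => sub_nonpos.2 ((h τ hτ).ahat_le_bhat k)

end Lookahead

/-- A policy for the event sequence `ω`, that is, a feasible decision `(α t, γ t)` for every slot,
together with the queues `Q`, `Z` and `H` that it drives. -/
structure Trajectory (P : Network Ω Act K M L) (ω : ℕ → Ω) where
  α : ℕ → Act
  γ : ℕ → Fin M → ℝ
  feasible : ∀ t, P.Feasible (ω t) (α t) (γ t)
  Q : Fin K → ℕ → ℝ
  Z : Fin L → ℕ → ℝ
  H : Fin M → ℕ → ℝ
  Q_zero_nonneg : ∀ k, 0 ≤ Q k 0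
  Z_zero_nonneg : ∀ l, 0 ≤ Z l 0
  Q_succ : ∀ k t, Q k (t + 1) = max (Q k t - P.bhat k (α t) (ω t)) 0 + P.ahat k (α t) (ω t)
  Z_succ : ∀ l t, Z l (t + 1) = max (Z l t + P.yhat l (α t) (ω t) + P.g l (γ t)) 0
  H_succ : ∀ m t, H m (t + 1) = H m t + γ t m - P.xhat m (α t) (ω t)

namespace Trajectory

variable {ω : ℕ → Ω} (S : Trajectory P ω) (V : ℝ)

/-- The Lyapunov function `L(Θ(t))`. -/
noncomputable def lyapunov (t : ℕ) : ℝ :=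
  (1 / 2) * ∑ l, S.Z l t ^ 2 + (1 / 2) * ∑ k, S.Q k t ^ 2 + (1 / 2) * ∑ m, S.H m t ^ 2

/-- The drift-plus-penalty expression of the decision `(a, γ)` for the event `w`, weighted by the
backlogs of slot `t`. The event need not be that of slot `t`, so that the expression can be
evaluated with outdated backlogs; `E_t` is the case `w = ω t`. -/
noncomputable def driftPlusPenalty (t : ℕ) (w : Ω) (a : Act) (γ : Fin M → ℝ) : ℝ :=
  driftExpr P.ahat P.bhat P.xhat P.y0hat P.yhat P.g P.f V w
    (fun l => S.Z l t) (fun k => S.Q k t) (fun m => S.H m t) a γ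

/-- The policy is `C`-approximate: in every slot it minimizes the drift-plus-penalty expression up
to `C`. -/
def IsApproximate (C : ℝ) : Prop :=
  ∀ t a γ, P.Feasible (ω t) a γ →
    S.driftPlusPenalty V t (ω t) (S.α t) (S.γ t) ≤ S.driftPlusPenalty V t (ω t) a γ + C

/-- The instantaneous cost `y₀(t) + f(γ(t))`, in which the auxiliary variables replace `x(t)`. -/
def cost (t : ℕ) : ℝ :=
  P.y0hat (S.α t) (ω t) + P.f (S.γ t)

lemma Q_nonneg (k : Fin K) (t : ℕ) : 0 ≤ S.Q k t := by
  cases t with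
  | zero => exact S.Q_zero_nonneg k
  | succ t =>
    rw [S.Q_succ]
    exact add_nonneg (le_max_right _ _) (P.ahat_bounds _ _ (S.feasible t).action_mem k).1

lemma Z_nonneg (l : Fin L) (t : ℕ) : 0 ≤ S.Z l t := by
  cases t with
  | zero => exact S.Z_zero_nonneg l
  | succ t => exact S.Z_succ l t ▸ le_max_right _ _

lemma lyapunov_nonneg (t : ℕ) : 0 ≤ S.lyapunov t := by
  unfold lyapunov
  positivity

lemma abs_Q_succ_sub_le (k : Fin K) (t : ℕ) : |S.Q k (t + 1) - S.Q k t| ≤ P.qdiff k := by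
  have ha := P.ahat_bounds _ _ (S.feasible t).action_mem k
  have hb := P.bhat_bounds _ _ (S.feasible t).action_mem k
  rw [S.Q_succ]
  exact (abs_max_sub_zero_add_sub_le (S.Q_nonneg k t) ha.1 hb.1).trans (max_le_max hb.2 ha.2)

lemma abs_Z_succ_sub_le (l : Fin L) (t : ℕ) : |S.Z l (t + 1) - S.Z l t| ≤ P.zdiff l := by
  have hy := P.yhat_bounds _ _ (S.feasible t).action_mem l
  have hg := P.g_bounds l _ (S.feasible t).mem_box
  rw [S.Z_succ, add_assoc, zdiff, max_comm |P.ymax l + P.gmax l|]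
  exact (abs_max_add_zero_sub_le _ (S.Z_nonneg l t)).trans
    (abs_le_max_abs_abs (add_le_add hy.1 hg.1) (add_le_add hy.2 hg.2))

lemma abs_H_succ_sub_le (m : Fin M) (t : ℕ) : |S.H m (t + 1) - S.H m t| ≤ P.hdiff m := by
  have hx := P.xhat_bounds _ _ (S.feasible t).action_mem m
  have hγ := (S.feasible t).mem_box m
  rw [S.H_succ, add_sub_assoc, add_sub_cancel_left, hdiff]
  exact abs_sub_le_of_le_of_le hγ.1 hγ.2 hx.1 hx.2

lemma H_sub_H_zero (m : Fin M) (n : ℕ) :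
    S.H m n - S.H m 0
      = ∑ τ ∈ Finset.range n, S.γ τ m - ∑ τ ∈ Finset.range n, P.xhat m (S.α τ) (ω τ) := by
  rw [← Finset.sum_range_sub, ← Finset.sum_sub_distrib]
  exact Finset.sum_congr rfl fun τ _ => by rw [S.H_succ]; ring

section Drift

lemma lyapunov_succ_add_cost_le (t : ℕ) :
    S.lyapunov (t + 1) + V * S.cost t ≤
      S.lyapunov t + P.secondMoment (ω t) (S.α t) (S.γ t)
        + S.driftPlusPenalty V t (ω t) (S.α t) (S.γ t) := by
  have ha := P.ahat_bounds _ _ (S.feasible t).action_mem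
  have hb := P.bhat_bounds _ _ (S.feasible t).action_mem
  have hZ (l : Fin L) : S.Z l (t + 1) ^ 2 ≤ S.Z l t ^ 2
      + (P.yhat l (S.α t) (ω t) + P.g l (S.γ t)) ^ 2
      + 2 * (S.Z l t * (P.yhat l (S.α t) (ω t) + P.g l (S.γ t))) := by
    rw [S.Z_succ, add_assoc]
    exact sq_max_add_zero_le _ _
  have hQ (k : Fin K) : S.Q k (t + 1) ^ 2 ≤ S.Q k t ^ 2
      + (P.bhat k (S.α t) (ω t) ^ 2 + P.ahat k (S.α t) (ω t) ^ 2)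
      + 2 * (S.Q k t * (P.ahat k (S.α t) (ω t) - P.bhat k (S.α t) (ω t))) := by
    rw [S.Q_succ]
    exact sq_max_sub_zero_add_le (S.Q_nonneg k t) (ha k).1 (hb k).1
  have hH (m : Fin M) : S.H m (t + 1) ^ 2 ≤ S.H m t ^ 2
      + (S.γ t m - P.xhat m (S.α t) (ω t)) ^ 2
      + 2 * (S.H m t * (S.γ t m - P.xhat m (S.α t) (ω t))) := by
    rw [S.H_succ]
    exact (by ring : _ = _).le
  have hZ_sum := sum_sq_le_of_forall_sq_le fun l (_ : l ∈ Finset.univ) => hZ l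
  have hQ_sum := sum_sq_le_of_forall_sq_le fun k (_ : k ∈ Finset.univ) => hQ k
  have hH_sum := sum_sq_le_of_forall_sq_le fun m (_ : m ∈ Finset.univ) => hH m
  unfold lyapunov cost secondMoment driftPlusPenalty driftExpr
  linarith

variable {V}

lemma driftPlusPenalty_le_add_stalenessCost {t τ : ℕ} (hτ : t ≤ τ) {w : Ω} {a : Act}
    {γ : Fin M → ℝ} (h : P.Feasible w a γ) :
    S.driftPlusPenalty V τ w a γ ≤
      S.driftPlusPenalty V t w a γ + 2 * ((τ : ℝ) - t) * P.stalenessCost w a γ := by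
  have hZ := sum_mul_le_sum_mul_add (s := Finset.univ) (fun l _ => S.abs_Z_succ_sub_le l)
    (fun l _ => le_refl |P.yhat l a w + P.g l γ|) hτ
  have hQ := sum_mul_le_sum_mul_add (s := Finset.univ) (fun k _ => S.abs_Q_succ_sub_le k)
    (fun k _ => abs_sub_le_of_nonneg_of_le (P.ahat_bounds w a h.action_mem k).1
      (le_max_right _ _) (P.bhat_bounds w a h.action_mem k).1 (le_max_left _ _)) hτ
  have hH := sum_mul_le_sum_mul_add (s := Finset.univ) (fun m _ => S.abs_H_succ_sub_le m)
    (fun m _ => (abs_sub_comm (γ m) (P.xhat m a w)).le) hτ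
  have hH_nonneg : 0 ≤ ((τ : ℝ) - t) * ∑ m, P.hdiff m * |P.xhat m a w - γ m| :=
    mul_nonneg (sub_nonneg.2 (by exact_mod_cast hτ)) <|
      Finset.sum_nonneg fun m _ => mul_nonneg (h.hdiff_nonneg m) (abs_nonneg _)
  unfold driftPlusPenalty driftExpr stalenessCost
  linarith

lemma sum_frame_driftPlusPenalty_le {T r : ℕ} (hT : 0 < T) {a : ℕ → Act}
    (ha : P.IsLookahead ω T r a) (t : ℕ) :
    ∑ τ ∈ frame T r, S.driftPlusPenalty V t (ω τ) (a τ) (P.frameX ω T r a) ≤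
      V * T * P.frameCost ω T r a := by
  have hconst (c : ℝ) : ∑ _τ ∈ frame T r, c = T * c := by
    rw [Finset.sum_const, card_frame, nsmul_eq_mul]
  have hZ : ∑ τ ∈ frame T r, ∑ l, S.Z l t *
      (P.yhat l (a τ) (ω τ) + P.g l (P.frameX ω T r a)) ≤ 0 :=
    sum_frame_sum_mul_nonpos hT (fun l _ => S.Z_nonneg l t) fun l _ => by
      rw [frameAvg_add, frameAvg_const hT]
      exact ha.yhat_add_g_nonpos l
  have hQ : ∑ τ ∈ frame T r, ∑ k, S.Q k t *
      (P.ahat k (a τ) (ω τ) - P.bhat k (a τ) (ω τ)) ≤ 0 :=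
    sum_frame_sum_mul_nonpos hT (fun k _ => S.Q_nonneg k t) fun k _ => ha.ahat_sub_bhat_nonpos k
  have hH : ∑ τ ∈ frame T r, ∑ m, S.H m t *
      (P.frameX ω T r a m - P.xhat m (a τ) (ω τ)) = 0 := by
    rw [Finset.sum_comm]
    refine Finset.sum_eq_zero fun m _ => ?_
    rw [← Finset.mul_sum, Finset.sum_sub_distrib, hconst, ← mul_frameAvg hT, frameX, sub_self,
      mul_zero]
  have hy : V * T * frameAvg T r (fun τ => P.y0hat (a τ) (ω τ))
      = V * ∑ τ ∈ frame T r, P.y0hat (a τ) (ω τ) := by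
    rw [mul_assoc, mul_frameAvg hT]
  unfold driftPlusPenalty driftExpr frameCost
  rw [Finset.sum_add_distrib, Finset.sum_add_distrib, Finset.sum_add_distrib,
    Finset.sum_add_distrib, hconst, ← Finset.mul_sum]
  linarith

lemma driftPlusPenalty_le_of_slotFeasible {w : Ω} {a : Act} (h : P.SlotFeasible w a) (t : ℕ) :
    S.driftPlusPenalty V t w a (fun m => P.xhat m a w) ≤
      V * (P.y0hat a w + P.f fun m => P.xhat m a w) := by
  have hZ : ∑ l, S.Z l t * (P.yhat l a w + P.g l fun m => P.xhat m a w) ≤ 0 :=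
    Finset.sum_nonpos fun l _ =>
      mul_nonpos_of_nonneg_of_nonpos (S.Z_nonneg l t) (h.yhat_add_g_nonpos l)
  have hQ : ∑ k, S.Q k t * (P.ahat k a w - P.bhat k a w) ≤ 0 :=
    Finset.sum_nonpos fun k _ =>
      mul_nonpos_of_nonneg_of_nonpos (S.Q_nonneg k t) (sub_nonpos.2 (h.ahat_le_bhat k))
  unfold driftPlusPenalty driftExpr
  simp only [sub_self, mul_zero, Finset.sum_const_zero]
  linarith

end Drift

section CostBound

variable {S V} {B C D : ℝ} {T r : ℕ}

lemma lyapunov_frame_le_frameCost (hS : S.IsApproximate V C)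
    (hB : ∀ t, P.secondMoment (ω t) (S.α t) (S.γ t) ≤ B)
    (hD : ∀ t a γ, P.Feasible (ω t) a γ → P.stalenessCost (ω t) a γ ≤ D)
    (hT : 0 < T) {a : ℕ → Act} (ha : P.IsLookahead ω T r a) :
    S.lyapunov ((r + 1) * T) + V * ∑ τ ∈ frame T r, S.cost τ ≤
      S.lyapunov (r * T) + V * T * P.frameCost ω T r a + T * (B + C) + T * ((T : ℝ) - 1) * D := by
  have hslot : ∀ τ ∈ frame T r, S.lyapunov (τ + 1) - S.lyapunov τ + V * S.cost τ ≤
      S.driftPlusPenalty V (r * T) (ω τ) (a τ) (P.frameX ω T r a) + (B + C)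
        + 2 * ((τ : ℝ) - (r * T : ℕ)) * D := by
    intro τ hτ
    have hfeas := ha.feasible hT hτ
    have hstart : r * T ≤ τ := (Finset.mem_Ico.1 hτ).1
    have hage : 0 ≤ 2 * ((τ : ℝ) - (r * T : ℕ)) :=
      mul_nonneg zero_le_two (sub_nonneg.2 (by exact_mod_cast hstart))
    linarith [S.lyapunov_succ_add_cost_le V τ, hB τ, hS τ _ _ hfeas,
      S.driftPlusPenalty_le_add_stalenessCost (V := V) hstart hfeas,
      mul_le_mul_of_nonneg_left (hD τ _ _ hfeas) hage]
  have hsum := Finset.sum_le_sum hslot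
  rw [Finset.sum_add_distrib, sum_frame_succ_sub, ← Finset.mul_sum, Finset.sum_add_distrib,
    Finset.sum_add_distrib, Finset.sum_const, card_frame, nsmul_eq_mul, ← Finset.sum_mul,
    sum_frame_sub_start] at hsum
  linarith [S.sum_frame_driftPlusPenalty_le (V := V) hT ha (r * T)]

lemma lyapunov_frame_le_frameOpt (hV : 0 < V) (hA2 : ∀ t, ∃ a, P.SlotFeasible (ω t) a)
    (hS : S.IsApproximate V C) (hB : ∀ t, P.secondMoment (ω t) (S.α t) (S.γ t) ≤ B)
    (hD : ∀ t a γ, P.Feasible (ω t) a γ → P.stalenessCost (ω t) a γ ≤ D)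
    (hT : 0 < T) (r : ℕ) :
    S.lyapunov ((r + 1) * T) + V * ∑ τ ∈ frame T r, S.cost τ ≤
      S.lyapunov (r * T) + V * T * P.frameOpt ω T r + T * (B + C) + T * ((T : ℝ) - 1) * D := by
  choose a' ha' using hA2
  have hVT : 0 < V * T := mul_pos hV (by exact_mod_cast hT)
  have hopt : (S.lyapunov ((r + 1) * T) + V * ∑ τ ∈ frame T r, S.cost τ
      - S.lyapunov (r * T) - T * (B + C) - T * ((T : ℝ) - 1) * D) / (V * T)
        ≤ P.frameOpt ω T r :=
    le_frameOpt ⟨a', isLookahead_of_slotFeasible hT fun τ _ => ha' τ⟩ fun a ha => by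
      rw [div_le_iff₀' hVT]
      linarith [lyapunov_frame_le_frameCost hS hB hD hT ha]
  rw [div_le_iff₀' hVT] at hopt
  linarith

lemma sum_cost_le (hV : 0 < V) (hA2 : ∀ t, ∃ a, P.SlotFeasible (ω t) a)
    (hS : S.IsApproximate V C) (hB : ∀ t, P.secondMoment (ω t) (S.α t) (S.γ t) ≤ B)
    (hD : ∀ t a γ, P.Feasible (ω t) a γ → P.stalenessCost (ω t) a γ ≤ D)
    (hT : 0 < T) (R : ℕ) :
    V * ∑ τ ∈ Finset.range (R * T), S.cost τ ≤
      V * T * ∑ r ∈ Finset.range R, P.frameOpt ω T r + R * T * (B + C)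
        + R * T * ((T : ℝ) - 1) * D + S.lyapunov 0 := by
  have hframe : ∀ r ∈ Finset.range R, S.lyapunov ((r + 1) * T) - S.lyapunov (r * T)
      + V * ∑ τ ∈ frame T r, S.cost τ ≤
        V * T * P.frameOpt ω T r + (T * (B + C) + T * ((T : ℝ) - 1) * D) := fun r _ => by
    linarith [lyapunov_frame_le_frameOpt hV hA2 hS hB hD hT r]
  have hsum := Finset.sum_le_sum hframe
  rw [Finset.sum_add_distrib, Finset.sum_range_sub (fun r => S.lyapunov (r * T)),
    ← Finset.mul_sum, sum_range_sum_frame, Finset.sum_add_distrib, ← Finset.mul_sum,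
    Finset.sum_const, Finset.card_range, nsmul_eq_mul, zero_mul] at hsum
  linarith [S.lyapunov_nonneg (R * T)]

lemma average_cost_le (hV : 0 < V) (hA2 : ∀ t, ∃ a, P.SlotFeasible (ω t) a)
    (hS : S.IsApproximate V C) (hB : ∀ t, P.secondMoment (ω t) (S.α t) (S.γ t) ≤ B)
    (hD : ∀ t a γ, P.Feasible (ω t) a γ → P.stalenessCost (ω t) a γ ≤ D)
    (hT : 0 < T) {R : ℕ} (hR : 0 < R) :
    (∑ τ ∈ Finset.range (R * T), S.cost τ) / (R * T) ≤
      (∑ r ∈ Finset.range R, P.frameOpt ω T r) / R + (B + C) / V + D * ((T : ℝ) - 1) / V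
        + S.lyapunov 0 / (V * R * T) := by
  have hT' : (0 : ℝ) < T := by exact_mod_cast hT
  have hR' : (0 : ℝ) < R := by exact_mod_cast hR
  calc (∑ τ ∈ Finset.range (R * T), S.cost τ) / (R * T)
      = (V * ∑ τ ∈ Finset.range (R * T), S.cost τ) / (V * R * T) := by field_simp
    _ ≤ (V * T * ∑ r ∈ Finset.range R, P.frameOpt ω T r + R * T * (B + C)
          + R * T * ((T : ℝ) - 1) * D + S.lyapunov 0) / (V * R * T) := by
        gcongr
        exact sum_cost_le hV hA2 hS hB hD hT R
    _ = _ := by field_simp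

variable (S)

-- Jensen's inequality handles the average of `γ`; the Lipschitz bound then moves it to the
-- average of `x`, since `H m` accumulates the differences `γ m - x m`.
lemma f_average_le {n : ℕ} (hn : 0 < n) :
    P.f (fun m => (∑ τ ∈ Finset.range n, P.xhat m (S.α τ) (ω τ)) / n) ≤
      (∑ τ ∈ Finset.range n, P.f (S.γ τ)) / n + ∑ m, P.ν m * |S.H m n - S.H m 0| / n := by
  have hrange : (Finset.range n).Nonempty := Finset.nonempty_range_iff.2 hn.ne'
  set xbar : Fin M → ℝ := fun m => (∑ τ ∈ Finset.range n, P.xhat m (S.α τ) (ω τ)) / n with hxbar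
  set γbar : Fin M → ℝ := fun m => (∑ τ ∈ Finset.range n, S.γ τ m) / n with hγbar
  have hx_mem : xbar ∈ box P.xmin P.xmax := by
    simpa only [Finset.card_range] using sum_div_card_mem_of_convex (convex_box _ _) hrange
      fun τ _ => P.xhat_bounds _ _ (S.feasible τ).action_mem
  have hγ_mem : γbar ∈ box P.xmin P.xmax := by
    simpa only [Finset.card_range] using sum_div_card_mem_of_convex (convex_box _ _) hrange
      fun τ _ => (S.feasible τ).mem_box
  have hjensen : P.f γbar ≤ (∑ τ ∈ Finset.range n, P.f (S.γ τ)) / n := by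
    simpa only [Finset.card_range] using map_sum_div_card_le_of_convexOn P.convexOn_f hrange
      fun τ _ => (S.feasible τ).mem_box
  have hlip := P.f_add_le γbar (xbar - γbar) hγ_mem (by rwa [add_sub_cancel])
  have hdist (m : Fin M) : |(xbar - γbar) m| = |S.H m n - S.H m 0| / n := by
    rw [S.H_sub_H_zero, Pi.sub_apply, hxbar, hγbar, ← sub_div, abs_div, abs_sub_comm,
      Nat.abs_cast]
  simp only [add_sub_cancel, hdist, ← mul_div_assoc] at hlip
  linarith

end CostBound

section AuxiliaryQueues

variable {S V} {B C : ℝ}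

lemma lyapunov_succ_le (hV : 0 < V) (hS : S.IsApproximate V C)
    (hB : ∀ t, P.secondMoment (ω t) (S.α t) (S.γ t) ≤ B) {t : ℕ}
    (hA2 : ∃ a, P.SlotFeasible (ω t) a) :
    S.lyapunov (t + 1) ≤ S.lyapunov t
      + V * ((B + C) / V + (P.y0max - P.y0min) + (P.fmax - P.fmin)) := by
  obtain ⟨a, ha⟩ := hA2
  have hupper : P.y0hat a (ω t) + P.f (fun m => P.xhat m a (ω t)) ≤ P.y0max + P.fmax :=
    add_le_add (P.y0hat_bounds _ _ ha.action_mem).2 (P.f_bounds _ ha.feasible.mem_box).2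
  have hlower : P.y0min + P.fmin ≤ S.cost t :=
    add_le_add (P.y0hat_bounds _ _ (S.feasible t).action_mem).1
      (P.f_bounds _ (S.feasible t).mem_box).1
  have hBC : V * ((B + C) / V) = B + C := mul_div_cancel₀ _ hV.ne'
  linarith [S.lyapunov_succ_add_cost_le V t, hB t, hS t _ _ ha.feasible,
    S.driftPlusPenalty_le_of_slotFeasible (V := V) ha t,
    mul_le_mul_of_nonneg_left hupper hV.le, mul_le_mul_of_nonneg_left hlower hV.le]

lemma lyapunov_le (hV : 0 < V) (hS : S.IsApproximate V C)
    (hB : ∀ t, P.secondMoment (ω t) (S.α t) (S.γ t) ≤ B)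
    (hA2 : ∀ t, ∃ a, P.SlotFeasible (ω t) a) (n : ℕ) :
    S.lyapunov n ≤ S.lyapunov 0
      + n * (V * ((B + C) / V + (P.y0max - P.y0min) + (P.fmax - P.fmin))) := by
  induction n with
  | zero => simp
  | succ n ih =>
    push_cast
    linarith [lyapunov_succ_le hV hS hB (hA2 n)]

variable (S) in
lemma sq_H_le_two_mul_lyapunov (m : Fin M) (t : ℕ) : S.H m t ^ 2 ≤ 2 * S.lyapunov t := by
  have hZ : 0 ≤ ∑ l, S.Z l t ^ 2 := by positivity
  have hQ : 0 ≤ ∑ k, S.Q k t ^ 2 := by positivity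
  have hH : S.H m t ^ 2 ≤ ∑ m, S.H m t ^ 2 :=
    Finset.single_le_sum (f := fun m => S.H m t ^ 2) (fun _ _ => sq_nonneg _) (Finset.mem_univ m)
  unfold lyapunov
  linarith

lemma abs_H_div_le (hV : 0 < V) (hS : S.IsApproximate V C)
    (hB : ∀ t, P.secondMoment (ω t) (S.α t) (S.γ t) ≤ B)
    (hA2 : ∀ t, ∃ a, P.SlotFeasible (ω t) a) (h0 : S.lyapunov 0 = 0) (m : Fin M) {n : ℕ}
    (hn : 0 < n) :
    |S.H m n| / n ≤
      √(2 * ((B + C) / V + (P.y0max - P.y0min) + (P.fmax - P.fmin))) * √(V / n) := by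
  have hn' : (0 : ℝ) < n := by exact_mod_cast hn
  rw [← Real.sqrt_mul' _ (by positivity)]
  refine Real.le_sqrt_of_sq_le ?_
  set W := (B + C) / V + (P.y0max - P.y0min) + (P.fmax - P.fmin)
  calc (|S.H m n| / n) ^ 2 = S.H m n ^ 2 / n ^ 2 := by rw [div_pow, sq_abs]
    _ ≤ 2 * (n * (V * W)) / n ^ 2 := by
        gcongr
        linarith [S.sq_H_le_two_mul_lyapunov m n, lyapunov_le hV hS hB hA2 n]
    _ = 2 * W * (V / n) := by field_simp

end AuxiliaryQueues

end Trajectory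

end Network

theorem stmt_5_general {Ω Act : Type*} {K M L : ℕ} {P : Network Ω Act K M L} {ω : ℕ → Ω}
    (hA2 : ∀ t, ∃ a, P.SlotFeasible (ω t) a) {V C B D : ℝ} (hV : 0 < V) {S : P.Trajectory ω}
    (hS : S.IsApproximate V C) (hB : ∀ t, P.secondMoment (ω t) (S.α t) (S.γ t) ≤ B)
    (hD : ∀ t a γ, P.Feasible (ω t) a γ → P.stalenessCost (ω t) a γ ≤ D)
    {T R : ℕ} (hT : 0 < T) (hR : 0 < R) :
    ((∑ τ ∈ Finset.range (R * T), P.y0hat (S.α τ) (ω τ)) / (R * T)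
        + P.f (fun m => (∑ τ ∈ Finset.range (R * T), P.xhat m (S.α τ) (ω τ)) / (R * T))
      ≤ (∑ r ∈ Finset.range R, P.frameOpt ω T r) / R
        + (B + C) / V + D * ((T : ℝ) - 1) / V + S.lyapunov 0 / (V * R * T)
        + ∑ m, P.ν m * |S.H m (R * T) - S.H m 0| / (R * T)) ∧
    (((∀ l, S.Z l 0 = 0) ∧ (∀ k, S.Q k 0 = 0) ∧ (∀ m, S.H m 0 = 0)) →
      ∑ m, P.ν m * |S.H m (R * T) - S.H m 0| / (R * T)
        ≤ ∑ m, P.ν m * √(2 * ((B + C) / V + (P.y0max - P.y0min) + (P.fmax - P.fmin)))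
          * √(V / (R * T))) := by
  have hRT : 0 < R * T := Nat.mul_pos hR hT
  constructor
  · have hcost := Network.Trajectory.average_cost_le hV hA2 hS hB hD hT hR
    have hf := S.f_average_le hRT
    simp only [Network.Trajectory.cost, Finset.sum_add_distrib] at hcost
    rw [add_div (Finset.sum _ _)] at hcost
    push_cast at hf
    linarith
  · rintro ⟨hZ, hQ, hH⟩
    have h0 : S.lyapunov 0 = 0 := by simp [Network.Trajectory.lyapunov, hZ, hQ, hH]
    refine Finset.sum_le_sum fun m _ => ?_
    rw [hH, sub_zero, mul_div_assoc, mul_assoc]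
    refine mul_le_mul_of_nonneg_left ?_ (P.ν_nonneg m)
    exact_mod_cast Network.Trajectory.abs_H_div_le hV hS hB hA2 h0 m hRT

/-- Theorem 1(c): under Assumptions A1 and A2, a `C`-approximate policy satisfies, for
any frame size `T` and number of frames `R` with `t_end = RT`,
`ȳ₀ + f(x̄) ≤ (1/R)Σ_r F_r^* + (B+C)/V + D(T−1)/V + L(Θ(0))/(VRT)
 + Σ_m ν_m|H_m(RT)−H_m(0)|/(RT)`, and if all queues start empty the final term is at
most `Σ_m ν_m C₀√(V/(RT))`. -/
theorem stmt_5
    {Ω Act : Type*} (ω : ℕ → Ω) (A : Ω → Set Act) (hAne : ∀ w, (A w).Nonempty)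
    (K M L : ℕ) (hK : 0 < K) (hM : 0 < M) (hL : 0 < L)
    (ahat bhat : Fin K → Act → Ω → ℝ) (xhat : Fin M → Act → Ω → ℝ)
    (y0hat : Act → Ω → ℝ) (yhat : Fin L → Act → Ω → ℝ)
    (amax bmax : Fin K → ℝ) (xmin xmax : Fin M → ℝ)
    (y0min y0max : ℝ) (ymin ymax : Fin L → ℝ)
    -- Assumption A1 (boundedness)
    (hA1a : ∀ (w : Ω) (a' : Act), a' ∈ A w → ∀ k, 0 ≤ ahat k a' w ∧ ahat k a' w ≤ amax k)
    (hA1b : ∀ (w : Ω) (a' : Act), a' ∈ A w → ∀ k, 0 ≤ bhat k a' w ∧ bhat k a' w ≤ bmax k)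
    (hA1x : ∀ (w : Ω) (a' : Act), a' ∈ A w → ∀ m, xmin m ≤ xhat m a' w ∧ xhat m a' w ≤ xmax m)
    (hA1y0 : ∀ (w : Ω) (a' : Act), a' ∈ A w → y0min ≤ y0hat a' w ∧ y0hat a' w ≤ y0max)
    (hA1y : ∀ (w : Ω) (a' : Act), a' ∈ A w → ∀ l, ymin l ≤ yhat l a' w ∧ yhat l a' w ≤ ymax l)
    -- the convex set X and the cost functions f, g_l on the box
    (X : Set (Fin M → ℝ)) (hX : Convex ℝ X)
    (f : (Fin M → ℝ) → ℝ) (g : Fin L → (Fin M → ℝ) → ℝ)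
    (fmin fmax : ℝ) (gmin gmax : Fin L → ℝ) (ν : Fin M → ℝ)
    (hν : ∀ m, 0 ≤ ν m)
    (hfconv : ConvexOn ℝ {x : Fin M → ℝ | ∀ m, xmin m ≤ x m ∧ x m ≤ xmax m} f)
    (hfcont : ContinuousOn f {x : Fin M → ℝ | ∀ m, xmin m ≤ x m ∧ x m ≤ xmax m})
    (hfbd : ∀ x ∈ {x : Fin M → ℝ | ∀ m, xmin m ≤ x m ∧ x m ≤ xmax m},
      fmin ≤ f x ∧ f x ≤ fmax)
    (hflip : ∀ (x y : Fin M → ℝ),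
      (∀ m, xmin m ≤ x m ∧ x m ≤ xmax m) →
      (∀ m, xmin m ≤ x m + y m ∧ x m + y m ≤ xmax m) →
      f (x + y) ≤ f x + ∑ m, ν m * |y m|)
    (hgconv : ∀ l, ConvexOn ℝ {x : Fin M → ℝ | ∀ m, xmin m ≤ x m ∧ x m ≤ xmax m} (g l))
    (hgcont : ∀ l, ContinuousOn (g l) {x : Fin M → ℝ | ∀ m, xmin m ≤ x m ∧ x m ≤ xmax m})
    (hgbd : ∀ l, ∀ x ∈ {x : Fin M → ℝ | ∀ m, xmin m ≤ x m ∧ x m ≤ xmax m},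
      gmin l ≤ g l x ∧ g l x ≤ gmax l)
    -- Assumption A2
    (hA2 : ∀ t, ∃ a' ∈ A (ω t),
      (∀ l, yhat l a' (ω t) + g l (fun m => xhat m a' (ω t)) ≤ 0) ∧
      (∀ k, ahat k a' (ω t) ≤ bhat k a' (ω t)) ∧
      (fun m => xhat m a' (ω t)) ∈ X)
    -- parameters
    (V C B D : ℝ) (hV : 0 < V) (hC : 0 ≤ C)
    (hB : ∀ (t : ℕ) (a' : Act) (γ' : Fin M → ℝ), a' ∈ A (ω t) → γ' ∈ X →
      (∀ m, xmin m ≤ γ' m ∧ γ' m ≤ xmax m) →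
      (1 / 2) * ∑ l, (yhat l a' (ω t) + g l γ') ^ 2
        + (1 / 2) * ∑ k, ((bhat k a' (ω t)) ^ 2 + (ahat k a' (ω t)) ^ 2)
        + (1 / 2) * ∑ m, (γ' m - xhat m a' (ω t)) ^ 2 ≤ B)
    (hD : ∀ (t : ℕ) (a' : Act) (γ' : Fin M → ℝ), a' ∈ A (ω t) → γ' ∈ X →
      (∀ m, xmin m ≤ γ' m ∧ γ' m ≤ xmax m) →
      (1 / 2) * ∑ l, max (|ymax l + gmax l|) (|ymin l + gmin l|)
          * |yhat l a' (ω t) + g l γ'|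
        + ∑ m, (xmax m - xmin m) * |xhat m a' (ω t) - γ' m|
        + (1 / 2) * ∑ k, max (bmax k) (amax k)
          * max (bhat k a' (ω t)) (ahat k a' (ω t)) ≤ D)
    -- the C-approximate policy and the queues
    (α : ℕ → Act) (γ : ℕ → Fin M → ℝ)
    (hα : ∀ t, α t ∈ A (ω t)) (hγX : ∀ t, γ t ∈ X)
    (hγbox : ∀ t m, xmin m ≤ γ t m ∧ γ t m ≤ xmax m)
    (Q : Fin K → ℕ → ℝ) (Z : Fin L → ℕ → ℝ) (H : Fin M → ℕ → ℝ)
    (hQ0 : ∀ k, 0 ≤ Q k 0) (hZ0 : ∀ l, 0 ≤ Z l 0)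
    (hQ : ∀ k t, Q k (t + 1) = max (Q k t - bhat k (α t) (ω t)) 0 + ahat k (α t) (ω t))
    (hZ : ∀ l t, Z l (t + 1) = max (Z l t + yhat l (α t) (ω t) + g l (γ t)) 0)
    (hH : ∀ m t, H m (t + 1) = H m t + γ t m - xhat m (α t) (ω t))
    (hCapprox : ∀ (t : ℕ) (a' : Act) (γ' : Fin M → ℝ), a' ∈ A (ω t) → γ' ∈ X →
      (∀ m, xmin m ≤ γ' m ∧ γ' m ≤ xmax m) →
      driftExpr ahat bhat xhat y0hat yhat g f V (ω t)
          (fun l => Z l t) (fun k => Q k t) (fun m => H m t) (α t) (γ t)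
        ≤ driftExpr ahat bhat xhat y0hat yhat g f V (ω t)
          (fun l => Z l t) (fun k => Q k t) (fun m => H m t) a' γ' + C)
    -- the Lyapunov function and the constant C₀
    (Ly : ℕ → ℝ)
    (hLy : ∀ t, Ly t = (1 / 2) * ∑ l, (Z l t) ^ 2 + (1 / 2) * ∑ k, (Q k t) ^ 2
        + (1 / 2) * ∑ m, (H m t) ^ 2)
    (C₀ : ℝ)
    (hC₀ : C₀ = Real.sqrt (2 * ((B + C) / V + (y0max - y0min) + (fmax - fmin))))
    -- frames
    (T R : ℕ) (hT : 0 < T) (hR : 0 < R) :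
    ((∑ τ ∈ Finset.range (R * T), y0hat (α τ) (ω τ)) / (R * T)
        + f (fun m => (∑ τ ∈ Finset.range (R * T), xhat m (α τ) (ω τ)) / (R * T))
      ≤ (∑ r ∈ Finset.range R,
            FrStar ω A ahat bhat xhat y0hat yhat g f X T r) / R
        + (B + C) / V + D * ((T : ℝ) - 1) / V + Ly 0 / (V * R * T)
        + ∑ m, ν m * |H m (R * T) - H m 0| / (R * T)) ∧
    (((∀ l, Z l 0 = 0) ∧ (∀ k, Q k 0 = 0) ∧ (∀ m, H m 0 = 0)) →
      ∑ m, ν m * |H m (R * T) - H m 0| / (R * T)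
        ≤ ∑ m, ν m * C₀ * Real.sqrt (V / (R * T))) := by
  let P : Network Ω Act K M L :=
    { A, ahat, bhat, xhat, y0hat, yhat, amax, bmax, xmin, xmax, y0min, y0max, ymin, ymax,
      ahat_bounds := hA1a, bhat_bounds := hA1b, xhat_bounds := hA1x, y0hat_bounds := hA1y0,
      yhat_bounds := hA1y, X, convex_X := hX, f, g, fmin, fmax, gmin, gmax, ν, ν_nonneg := hν,
      convexOn_f := hfconv, f_bounds := hfbd, f_add_le := hflip, convexOn_g := hgconv,
      g_bounds := hgbd }
  let S : P.Trajectory ω :=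
    { α, γ, feasible := fun t => ⟨hα t, hγX t, hγbox t⟩, Q, Z, H, Q_zero_nonneg := hQ0,
      Z_zero_nonneg := hZ0, Q_succ := hQ, Z_succ := hZ, H_succ := hH }
  have hslot (t : ℕ) : ∃ a, P.SlotFeasible (ω t) a :=
    let ⟨a, ha, hy, hab, hx⟩ := hA2 t
    ⟨a, ha, hy, hab, hx⟩
  rw [hLy 0, hC₀]
  exact stmt_5_general hslot hV (S := S) (fun t a γ h => hCapprox t a γ h.1 h.2 h.3)
    (fun t => hB t _ _ (hα t) (hγX t) (hγbox t)) (fun t a γ h => hD t a γ h.1 h.2 h.3) hT hR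
end
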